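/- For all integers n ≥ 2 and k with 2 ≤ k ≤ 2^(n-1)+1: if k is even then v₂(s(2^n, 2^n - k)) = n - 1 - v₂(k), and if k is odd then v₂(s(2^n, 2^n - k)) = 2n - 2 - v₂(k-1). -/

import Mathlib

/-!
The Stirling numbers `s(2^n, ·)` are the coefficients of `P_n(x) = x(x+1)⋯(x+2^n-1)`, and the two
parities are governed by two congruences.

*Even `k`.* The doubling identity `P_{n+1}(x) = P_n(x) P_n(x+2^n)` gives `P_{n+1} ≡ P_n²` modulo
`2^n`. Since squaring a congruence modulo `2^m`, `m ≥ 1`, improves it to one modulo `2^(m+1)`, and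
`P_1 = x(x+1)` exactly, induction yields `P_n ≡ (x(x+1))^(2^(n-1))` modulo `2^(n-1)`. Hence
`s(2^n, 2^n-k) ≡ C(2^(n-1), k)` modulo `2^(n-1)`, and this binomial coefficient has valuation `n-1-v₂(k)`, which for even `k` is below the
precision `n-1`.

*Odd `k`.* With `N = 2^n`, the polynomial `Q(x) = P_n(x)/x` satisfies `Q(-N-x) = -Q(x)`. Expanding
to first order modulo `N²` and comparing coefficients gives
`2 s(N, N-k) ≡ N (N-k) s(N, N-k+1)` modulo `N²`. As `N-k` is odd, the even case for `k-1` shows that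
the right-hand side has valuation `2n-1-v₂(k-1) < 2n`, which determines the left-hand side.
-/

open Polynomial Finset

/-- Unsigned Stirling number of the first kind: coefficient of `x^k` in
`x(x+1)⋯(x+n-1)`. -/
noncomputable def sF (n k : ℕ) : ℕ :=
  (∏ i ∈ Finset.range n, (X + C i : Polynomial ℕ)).coeff k

/-- The `m`-th Stirling number of the first kind: coefficient of `x^k` in
`(x+m)(x+m+1)⋯(x+m+n-1)`. -/
noncomputable def sM (m n k : ℕ) : ℕ :=
  (∏ i ∈ Finset.range n, (X + C (m + i) : Polynomial ℕ)).coeff k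

/-- `H n k`: the `k`-th elementary symmetric function of `1, 1/2, …, 1/n`. -/
def Hfun (n k : ℕ) : ℚ :=
  ((Finset.Icc 1 n).val.map (fun i => (1 : ℚ) / i)).esymm k

/-- The rising factorial `x(x+1)⋯(x+N-1)` over `ℤ`, so that congruences and subtraction
are available. -/
noncomputable def risingPoly (N : ℕ) : ℤ[X] := ∏ i ∈ Finset.range N, (X + C (i : ℤ))

/-- The polynomial `(x+1)⋯(x+N-1)`, i.e. the rising factorial of length `N` divided by `x`. -/
noncomputable def risingTail (N : ℕ) : ℤ[X] :=
  ∏ i ∈ Finset.range (N - 1), (X + C ((i : ℤ) + 1))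

lemma coeff_risingPoly (N k : ℕ) : (risingPoly N).coeff k = (sF N k : ℤ) := by
  have h : risingPoly N =
      (∏ i ∈ Finset.range N, (X + C i : Polynomial ℕ)).map (Nat.castRingHom ℤ) := by
    simp [risingPoly, Polynomial.map_prod]
  rw [h, coeff_map]
  rfl

lemma risingPoly_eq_risingTail_mul_X {N : ℕ} (hN : 1 ≤ N) :
    risingPoly N = risingTail N * X := by
  obtain ⟨M, rfl⟩ : ∃ M, N = M + 1 := ⟨N - 1, by omega⟩
  simp [risingPoly, risingTail, Finset.prod_range_succ']

lemma coeff_risingTail {N : ℕ} (hN : 1 ≤ N) (d : ℕ) :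
    (risingTail N).coeff d = (sF N (d + 1) : ℤ) := by
  rw [← coeff_risingPoly, risingPoly_eq_risingTail_mul_X hN, coeff_mul_X]

lemma coeff_comp_neg_X (p : ℤ[X]) (d : ℕ) :
    (p.comp (-X)).coeff d = p.coeff d * (-1) ^ d := by
  have h : (-X : ℤ[X]) = C (-1) * X := by simp
  rw [h, comp_C_mul_X_coeff]

/-- First-order Taylor expansion of `p(x + c)` modulo `c²`. -/
lemma comp_add_C_modEq_sq (p : ℤ[X]) (c : ℤ) :
    C (c ^ 2) ∣ p.comp (X + C c) - (p + C c * derivative p) := by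
  obtain ⟨k, hk⟩ := Polynomial.binomExpansion (p.map C) (X : ℤ[X]) (C c)
  rw [derivative_map, eval_map, eval_map, eval_map, ← comp, ← comp, ← comp, comp_X, comp_X] at hk
  exact ⟨k, by rw [hk, C_pow]; ring⟩

lemma comp_add_C_modEq (p : ℤ[X]) (c : ℤ) : C c ∣ p.comp (X + C c) - p := by
  obtain ⟨q, hq⟩ := comp_add_C_modEq_sq p c
  exact ⟨C c * q + derivative p, by rw [C_pow] at hq; linear_combination hq⟩

lemma risingPoly_two_mul (N : ℕ) :
    risingPoly (2 * N) = risingPoly N * (risingPoly N).comp (X + C (N : ℤ)) := by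
  rw [two_mul, risingPoly, Finset.prod_range_add, risingPoly, Polynomial.prod_comp]
  congr 1
  refine Finset.prod_congr rfl fun i _ => ?_
  simp only [add_comp, X_comp, C_comp]
  push_cast
  rw [C_add]
  ring

/-- `x(x+1)⋯(x+2^(m+1)-1)` is congruent to `(x(x+1))^(2^m)` modulo `2^m`: doubling the length
squares both sides, and squaring a congruence modulo `2^m` (with `m ≥ 1`) gains a factor `2`. -/
lemma risingPoly_two_pow_modEq (m : ℕ) :
    C ((2 : ℤ) ^ m) ∣ risingPoly (2 ^ (m + 1)) - (X * (X + 1)) ^ 2 ^ m := by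
  induction m with
  | zero => simp
  | succ m ih =>
    have hshift := comp_add_C_modEq (risingPoly (2 ^ (m + 1))) (2 ^ (m + 1))
    have hdouble := risingPoly_two_mul (2 ^ (m + 1))
    rw [← pow_succ', Nat.cast_pow, Nat.cast_ofNat] at hdouble
    obtain ⟨q, hq⟩ := ih
    obtain ⟨r, hr⟩ := hshift
    rw [hdouble]
    have hsq : (X * (X + 1) : ℤ[X]) ^ 2 ^ (m + 1) = ((X * (X + 1)) ^ 2 ^ m) ^ 2 := by
      rw [pow_succ 2 m, pow_mul]
    rw [hsq]
    set A : ℤ[X] := (X * (X + 1)) ^ 2 ^ m with hA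
    set P := risingPoly (2 ^ (m + 1)) with hP
    generalize P.comp (X + C (2 ^ (m + 1))) = S at hr hdouble ⊢
    rcases Nat.eq_zero_or_pos m with rfl | hm
    ·
      -- The congruence modulo `2^0` is void, but for length `2` it is an equality.
      have hPA : P = A := by
        simp [hP, hA, risingPoly, Finset.prod_range_succ]
      exact ⟨P * r, by linear_combination P * hr + (P + A) * hPA⟩
    · obtain ⟨l, rfl⟩ : ∃ l, m = l + 1 := ⟨m - 1, by omega⟩
      refine ⟨P * r + A * q + C (2 ^ l) * q ^ 2, ?_⟩
      simp only [pow_succ, pow_zero, C_mul, C_pow] at hq hr ⊢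
      have h2 : (C (2 : ℤ) : ℤ[X]) = 2 := rfl
      rw [h2] at hq hr ⊢
      linear_combination P * hr + (P + A) * hq + 2 ^ l * 2 * q * hq

lemma sF_two_pow_modEq_choose (m k : ℕ) (hk : k ≤ 2 ^ m) :
    (2 : ℤ) ^ m ∣ (sF (2 ^ (m + 1)) (2 ^ (m + 1) - k) : ℤ) - ((2 ^ m).choose k : ℤ) := by
  have h := (C_dvd_iff_dvd_coeff _ _).1 (risingPoly_two_pow_modEq m) (2 ^ (m + 1) - k)
  have e : 2 ^ (m + 1) - k = (2 ^ m - k) + 2 ^ m := by rw [pow_succ]; omega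
  rwa [coeff_sub, coeff_risingPoly, mul_pow, e, coeff_X_pow_mul, coeff_X_add_one_pow,
    Nat.choose_symm hk, ← e] at h

/-- The reflection `x ↦ -N - x` permutes the roots `-1, …, -(N-1)`, and for even `N` there is an
odd number of them. -/
lemma risingTail_reflect {N : ℕ} (hN : Even N) (hN0 : 1 ≤ N) :
    ((risingTail N).comp (-X)).comp (X + C (N : ℤ)) = -risingTail N := by
  have hodd : Odd (N - 1) := by
    obtain ⟨M, rfl⟩ := hN
    exact ⟨M - 1, by omega⟩
  simp only [risingTail, Polynomial.prod_comp]
  rw [← Finset.prod_range_reflect]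
  have h : ∀ i ∈ Finset.range (N - 1),
      ((X + C (((N - 1 - 1 - i : ℕ) : ℤ) + 1)).comp (-X)).comp (X + C (N : ℤ)) =
        (-1 : ℤ[X]) * (X + C ((i : ℤ) + 1)) := by
    intro i hi
    rw [Finset.mem_range] at hi
    have e : (((N - 1 - 1 - i : ℕ) : ℤ) + 1) = (N : ℤ) - (i + 1) := by omega
    rw [e]
    simp only [add_comp, X_comp, C_comp, neg_comp]
    rw [C_sub]
    ring
  rw [Finset.prod_congr rfl h, Finset.prod_mul_distrib, Finset.prod_const, Finset.card_range,
    hodd.neg_one_pow, neg_one_mul]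

/-- Comparing coefficients of even degree in the reflection identity, expanded modulo `N²`. -/
lemma two_mul_sF_modEq {N d : ℕ} (hN : Even N) (hN0 : 1 ≤ N) (hd : Even d) :
    (N : ℤ) ^ 2 ∣ 2 * (sF N (d + 1) : ℤ) - N * (d + 1) * sF N (d + 2) := by
  have h := comp_add_C_modEq_sq ((risingTail N).comp (-X)) N
  rw [risingTail_reflect hN hN0] at h
  have h := (C_dvd_iff_dvd_coeff _ _).1 h d
  rw [coeff_sub, coeff_add, coeff_neg, coeff_C_mul, coeff_derivative, coeff_comp_neg_X,
    coeff_comp_neg_X, coeff_risingTail hN0, coeff_risingTail hN0, hd.neg_one_pow,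
    hd.add_one.neg_one_pow] at h
  rw [← dvd_neg]
  convert h using 1
  ring

lemma padicValNat_eq_of_modEq {a c m : ℕ} (hc : c ≠ 0) (hm : padicValNat 2 c < m)
    (h : (2 : ℤ) ^ m ∣ (a : ℤ) - c) : a ≠ 0 ∧ padicValNat 2 a = padicValNat 2 c := by
  have key : ∀ j ≤ m, (2 ^ j ∣ a ↔ 2 ^ j ∣ c) := by
    intro j hj
    have h1 : ((2 ^ j : ℕ) : ℤ) ∣ (a : ℤ) - c := by
      push_cast
      exact (pow_dvd_pow 2 hj).trans h
    rw [← Int.natCast_dvd_natCast, ← Int.natCast_dvd_natCast (n := c)]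
    exact (dvd_iff_dvd_of_dvd_sub h1)
  have hnd : ¬ 2 ^ (padicValNat 2 c + 1) ∣ a := by
    rw [key _ hm, padicValNat_dvd_iff_le hc]
    omega
  have ha : a ≠ 0 := by
    rintro rfl
    exact hnd (dvd_zero _)
  have hd : 2 ^ padicValNat 2 c ∣ a := (key _ hm.le).2 pow_padicValNat_dvd
  rw [padicValNat_dvd_iff_le ha] at hd hnd
  exact ⟨ha, by omega⟩

lemma padicValNat_choose_two_pow {m k : ℕ} (hk0 : k ≠ 0) (hk : k ≤ 2 ^ m) :
    padicValNat 2 ((2 ^ m).choose k) + padicValNat 2 k = m := by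
  have h := Nat.Prime.emultiplicity_choose_prime_pow_add_emultiplicity Nat.prime_two hk hk0
  rw [← padicValNat_eq_emultiplicity (Nat.choose_pos hk).ne',
    ← padicValNat_eq_emultiplicity hk0] at h
  exact_mod_cast h

/-- The even case, with `n = m + 1`. -/
lemma padicValNat_sF_even {m k : ℕ} (hk0 : k ≠ 0) (hk : k ≤ 2 ^ m) (hev : Even k) :
    sF (2 ^ (m + 1)) (2 ^ (m + 1) - k) ≠ 0 ∧
      padicValNat 2 (sF (2 ^ (m + 1)) (2 ^ (m + 1) - k)) + padicValNat 2 k = m := by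
  have hc := padicValNat_choose_two_pow hk0 hk
  have hv : 1 ≤ padicValNat 2 k := one_le_padicValNat_of_dvd hk0 hev.two_dvd
  obtain ⟨hne, h⟩ :=
    padicValNat_eq_of_modEq (Nat.choose_pos hk).ne' (by omega) (sF_two_pow_modEq_choose m k hk)
  exact ⟨hne, by omega⟩

theorem stmt2 (n k : ℕ) (hn : 2 ≤ n) (hk : 2 ≤ k) (hk' : k ≤ 2 ^ (n - 1) + 1) :
    (Even k → (padicValNat 2 (sF (2 ^ n) (2 ^ n - k)) : ℤ) = (n : ℤ) - 1 - padicValNat 2 k) ∧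
    (Odd k → (padicValNat 2 (sF (2 ^ n) (2 ^ n - k)) : ℤ) =
      2 * (n : ℤ) - 2 - padicValNat 2 (k - 1)) := by
  obtain ⟨m, rfl⟩ : ∃ m, n = m + 1 := ⟨n - 1, by omega⟩
  rw [Nat.add_sub_cancel] at hk'
  have hpow : Even (2 ^ m) := Nat.even_pow.2 ⟨even_two, by omega⟩
  have hsucc : 2 ^ (m + 1) = 2 * 2 ^ m := pow_succ' 2 m
  constructor
  · intro hev
    have hle : k ≤ 2 ^ m := by
      rcases hpow with ⟨a, ha⟩
      rcases hev with ⟨b, hb⟩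
      omega
    obtain ⟨-, h⟩ := padicValNat_sF_even (m := m) (k := k) (by omega) hle hev
    omega
  · intro hod
    have hev : Even (k - 1) := by
      rcases hod with ⟨b, hb⟩
      exact ⟨b, by omega⟩
    obtain ⟨hne, h⟩ := padicValNat_sF_even (m := m) (k := k - 1) (by omega) (by omega) hev
    have hv : 1 ≤ padicValNat 2 (k - 1) := one_le_padicValNat_of_dvd (by omega) hev.two_dvd
    have hm2 : 2 ≤ 2 ^ m := by
      calc 2 = 2 ^ 1 := rfl
        _ ≤ 2 ^ m := Nat.pow_le_pow_right (by norm_num) (by omega)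
    obtain ⟨d, hd⟩ : ∃ d, 2 ^ (m + 1) = d + 1 + k := ⟨2 ^ (m + 1) - k - 1, by omega⟩
    have hde : Even d := by
      rcases hod with ⟨b, hb⟩
      exact ⟨2 ^ m - b - 1, by omega⟩
    have hmod := two_mul_sF_modEq (N := 2 ^ (m + 1)) ⟨2 ^ m, by omega⟩ (by omega) hde
    have e1 : 2 ^ (m + 1) - k = d + 1 := by omega
    have e2 : 2 ^ (m + 1) - (k - 1) = d + 2 := by omega
    rw [e1]
    rw [e2] at h hne
    have hdodd : padicValNat 2 (d + 1) = 0 :=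
      padicValNat.eq_zero_of_not_dvd (by rcases hde with ⟨b, hb⟩; omega)
    have hval : padicValNat 2 (2 ^ (m + 1) * (d + 1) * sF (2 ^ (m + 1)) (d + 2)) =
        m + 1 + padicValNat 2 (sF (2 ^ (m + 1)) (d + 2)) := by
      rw [padicValNat.mul (by positivity) hne, padicValNat.mul (by positivity) (by positivity),
        padicValNat.prime_pow, hdodd, add_zero]
    obtain ⟨hne2, hmain⟩ := padicValNat_eq_of_modEq (a := 2 * sF (2 ^ (m + 1)) (d + 1))
      (c := 2 ^ (m + 1) * (d + 1) * sF (2 ^ (m + 1)) (d + 2)) (m := (m + 1) * 2)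
      (by positivity) (by omega) (by
        push_cast at hmod ⊢
        rwa [← pow_mul] at hmod)
    rw [padicValNat.mul two_ne_zero (by rintro h0; simp [h0] at hne2), padicValNat.self one_lt_two,
      hval] at hmain
    omega
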